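/- Let u : ℝ² → ℝ be a smooth, nowhere-vanishing function of (x,t) satisfying the mKdV equation u_t + u_xxx − 6u²u_x = 0, let Λ ∈ ℝ, and let (ψ₁,ψ₂) be smooth real functions on ℝ² satisfying the mKdV Lax pair ψ_x = b·ψ, ψ_t = c·ψ with b = [[−u, Λ],[Λ, u]] and c = [[u_xx − 2u³ + 4Λ²u, 2Λ(u² − u_x − 2Λ²)],[2Λ(u² + u_x − 2Λ²), −u_xx + 2u³ − 4Λ²u]]. Let z : ℝ² → ℝ be smooth with z_x = u and z_t = 2u³ − u_xx, let U be a smooth function of (z,τ) with U(z(x,t), t) = u(x,t), and let Ψ₁, Ψ₂ be smooth functions of (z,τ) with Ψ_i(z(x,t), t) = ψ_i(x,t) for all (x,t), i = 1,2. Then at every point of the form (z(x,t), t), the vector Ψ = (Ψ₁,Ψ₂)ᵀ satisfies the RmKdV Lax pair Ψ_z = B·Ψ and Ψ_τ = Λ·C·Ψ, where B = [[−1, Λ/U],[Λ/U, 1]] and C = [[4ΛU, U·U_zz + U_z² − 2U·U_z − 4Λ²],[U·U_zz + U_z² + 2U·U_z − 4Λ², −4ΛU]]. -/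

import Mathlib

noncomputable section

/-- Partial derivative of `f` with respect to its first argument. -/
def d1 (f : ℝ → ℝ → ℝ) : ℝ → ℝ → ℝ := fun a b => deriv (fun a' => f a' b) a

/-- Partial derivative of `f` with respect to its second argument. -/
def d2 (f : ℝ → ℝ → ℝ) : ℝ → ℝ → ℝ := fun a b => deriv (fun b' => f a b') b

/-- Smoothness of a two-variable real function. -/
def Smooth2 (f : ℝ → ℝ → ℝ) : Prop := ContDiff ℝ (⊤ : ℕ∞) (fun p : ℝ × ℝ => f p.1 p.2)

lemma smooth2_d1 {f : ℝ → ℝ → ℝ} (hf : Smooth2 f) : Smooth2 (d1 f) := by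
  unfold Smooth2 at *
  have h : (fun p : ℝ × ℝ => d1 f p.1 p.2)
      = fun p : ℝ × ℝ => fderiv ℝ (fun p : ℝ × ℝ => f p.1 p.2) p (1, 0) := by
    funext p
    have hd : DifferentiableAt ℝ (fun p : ℝ × ℝ => f p.1 p.2) (p.1, p.2) :=
      (hf.differentiable (by simp)).differentiableAt
    have hg : HasDerivAt (fun a : ℝ => (a, p.2)) ((1 : ℝ), (0 : ℝ)) p.1 :=
      (hasDerivAt_id p.1).prodMk (hasDerivAt_const p.1 p.2)
    exact (hd.hasFDerivAt.comp_hasDerivAt p.1 hg).deriv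
  rw [h]
  exact (hf.fderiv_right (m := (⊤ : ℕ∞)) (by simp)).clm_apply contDiff_const

/-- Chain rule along a curve. -/
lemma smooth2_chain {f : ℝ → ℝ → ℝ} (hf : Smooth2 f) {g h : ℝ → ℝ} {g' h' s : ℝ}
    (hg : HasDerivAt g g' s) (hh : HasDerivAt h h' s) :
    HasDerivAt (fun s => f (g s) (h s))
      (d1 f (g s) (h s) * g' + d2 f (g s) (h s) * h') s := by
  unfold Smooth2 at hf
  have hd : DifferentiableAt ℝ (fun p : ℝ × ℝ => f p.1 p.2) (g s, h s) :=
    (hf.differentiable (by simp)).differentiableAt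
  have hg1 : HasDerivAt (fun a : ℝ => (a, h s)) ((1 : ℝ), (0 : ℝ)) (g s) :=
    (hasDerivAt_id (g s)).prodMk (hasDerivAt_const (g s) (h s))
  have hg2 : HasDerivAt (fun b : ℝ => (g s, b)) ((0 : ℝ), (1 : ℝ)) (h s) :=
    (hasDerivAt_const (h s) (g s)).prodMk (hasDerivAt_id (h s))
  have e1 : d1 f (g s) (h s) = fderiv ℝ (fun p : ℝ × ℝ => f p.1 p.2) (g s, h s) (1, 0) := by
    have k := hd.hasFDerivAt.comp_hasDerivAt (g s) hg1
    exact k.deriv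
  have e2 : d2 f (g s) (h s) = fderiv ℝ (fun p : ℝ × ℝ => f p.1 p.2) (g s, h s) (0, 1) := by
    have k := hd.hasFDerivAt.comp_hasDerivAt (h s) hg2
    exact k.deriv
  have key := hd.hasFDerivAt.comp_hasDerivAt s (hg.prodMk hh)
  have e3 : ((g', h') : ℝ × ℝ) = g' • ((1 : ℝ), (0 : ℝ)) + h' • ((0 : ℝ), (1 : ℝ)) := by
    simp
  rw [e3, map_add, map_smul, map_smul, ← e1, ← e2, smul_eq_mul, smul_eq_mul,
    mul_comm g', mul_comm h'] at key
  exact key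

lemma smooth2_hasD1 {f : ℝ → ℝ → ℝ} (hf : Smooth2 f) (x t : ℝ) :
    HasDerivAt (fun x => f x t) (d1 f x t) x := by
  simpa using smooth2_chain hf (hasDerivAt_id x) (hasDerivAt_const x t)

lemma smooth2_hasD2 {f : ℝ → ℝ → ℝ} (hf : Smooth2 f) (x t : ℝ) :
    HasDerivAt (fun t => f x t) (d2 f x t) t := by
  simpa using smooth2_chain hf (hasDerivAt_const t x) (hasDerivAt_id t)

lemma chain_x {F f z : ℝ → ℝ → ℝ} (hF : Smooth2 F) (hz : Smooth2 z)
    (h : ∀ x t, F (z x t) t = f x t) (x t : ℝ) :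
    d1 f x t = d1 F (z x t) t * d1 z x t := by
  have k := smooth2_chain hF (smooth2_hasD1 hz x t) (hasDerivAt_const x t)
  simp only [h, mul_zero, add_zero] at k
  exact k.deriv

lemma chain_t {F f z : ℝ → ℝ → ℝ} (hF : Smooth2 F) (hz : Smooth2 z)
    (h : ∀ x t, F (z x t) t = f x t) (x t : ℝ) :
    d2 f x t = d1 F (z x t) t * d2 z x t + d2 F (z x t) t := by
  have k := smooth2_chain hF (smooth2_hasD2 hz x t) (hasDerivAt_id t)
  simp only [id, h, mul_one] at k
  exact k.deriv

/-- the reciprocal transformation of the mKdV Lax pair yields the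
RmKdV Lax pair `Ψ_z = B·Ψ`, `Ψ_τ = Λ·C·Ψ` at every point `(z(x,t), t)`. -/
theorem reciprocal_mKdV_LaxPair_to_RmKdV_LaxPair
    (u ψ₁ ψ₂ z U Ψ₁ Ψ₂ : ℝ → ℝ → ℝ) (Λ : ℝ)
    (hu : Smooth2 u) (hψ₁ : Smooth2 ψ₁) (hψ₂ : Smooth2 ψ₂)
    (hz : Smooth2 z) (hU : Smooth2 U) (hΨ₁ : Smooth2 Ψ₁) (hΨ₂ : Smooth2 Ψ₂)
    (hne : ∀ x t, u x t ≠ 0)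
    (hmKdV : ∀ x t, d2 u x t + d1 (d1 (d1 u)) x t - 6 * (u x t) ^ 2 * d1 u x t = 0)
    -- mKdV Lax pair  ψ_x = b·ψ,  ψ_t = c·ψ :
    (hx1 : ∀ x t, d1 ψ₁ x t = -(u x t) * ψ₁ x t + Λ * ψ₂ x t)
    (hx2 : ∀ x t, d1 ψ₂ x t = Λ * ψ₁ x t + u x t * ψ₂ x t)
    (ht1 : ∀ x t, d2 ψ₁ x t =
      (d1 (d1 u) x t - 2 * (u x t) ^ 3 + 4 * Λ ^ 2 * u x t) * ψ₁ x t
        + 2 * Λ * ((u x t) ^ 2 - d1 u x t - 2 * Λ ^ 2) * ψ₂ x t)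
    (ht2 : ∀ x t, d2 ψ₂ x t =
      2 * Λ * ((u x t) ^ 2 + d1 u x t - 2 * Λ ^ 2) * ψ₁ x t
        - (d1 (d1 u) x t - 2 * (u x t) ^ 3 + 4 * Λ ^ 2 * u x t) * ψ₂ x t)
    -- reciprocal transformation :
    (hzx : ∀ x t, d1 z x t = u x t)
    (hzt : ∀ x t, d2 z x t = 2 * (u x t) ^ 3 - d1 (d1 u) x t)
    (hUu : ∀ x t, U (z x t) t = u x t)
    (hΨψ₁ : ∀ x t, Ψ₁ (z x t) t = ψ₁ x t)
    (hΨψ₂ : ∀ x t, Ψ₂ (z x t) t = ψ₂ x t) :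
    ∀ x t,
      -- spatial part  Ψ_z = B·Ψ :
      (d1 Ψ₁ (z x t) t =
          -(Ψ₁ (z x t) t) + (Λ / U (z x t) t) * Ψ₂ (z x t) t
        ∧ d1 Ψ₂ (z x t) t =
          (Λ / U (z x t) t) * Ψ₁ (z x t) t + Ψ₂ (z x t) t)
      -- temporal part  Ψ_τ = Λ·C·Ψ :
      ∧ (d2 Ψ₁ (z x t) t = Λ *
          (4 * Λ * U (z x t) t * Ψ₁ (z x t) t
            + (U (z x t) t * d1 (d1 U) (z x t) t + (d1 U (z x t) t) ^ 2
                - 2 * U (z x t) t * d1 U (z x t) t - 4 * Λ ^ 2) * Ψ₂ (z x t) t)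
        ∧ d2 Ψ₂ (z x t) t = Λ *
          ((U (z x t) t * d1 (d1 U) (z x t) t + (d1 U (z x t) t) ^ 2
              + 2 * U (z x t) t * d1 U (z x t) t - 4 * Λ ^ 2) * Ψ₁ (z x t) t
            - 4 * Λ * U (z x t) t * Ψ₂ (z x t) t)) := by
  intro x t
  have n := hne x t
  have a1 := chain_x hΨ₁ hz hΨψ₁ x t
  have a2 := chain_x hΨ₂ hz hΨψ₂ x t
  have b1 := chain_t hΨ₁ hz hΨψ₁ x t
  have b2 := chain_t hΨ₂ hz hΨψ₂ x t
  have c1 : ∀ x t, d1 u x t = d1 U (z x t) t * u x t := fun x t => by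
    rw [chain_x hU hz hUu x t, hzx]
  have c2 : d1 (d1 u) x t = d1 (d1 U) (z x t) t * u x t * u x t
      + d1 U (z x t) t * d1 u x t := by
    have k := (smooth2_chain (smooth2_d1 hU) (smooth2_hasD1 hz x t)
      (hasDerivAt_const x t)).mul (smooth2_hasD1 hu x t)
    have e : (fun x => d1 u x t) = (fun x => d1 U (z x t) t) * (fun x => u x t) := by
      funext x; exact c1 x t
    have k2 := k.deriv
    rw [← e, mul_zero, add_zero, hzx] at k2
    exact k2
  rw [hzx, hx1] at a1
  rw [hzx, hx2] at a2
  rw [ht1, hzt] at b1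
  rw [ht2, hzt] at b2
  rw [c1 x t] at c2 b1 b2
  rw [c2] at b1 b2
  rw [hUu, hΨψ₁, hΨψ₂]
  have p1 : d1 Ψ₁ (z x t) t = -ψ₁ x t + Λ / u x t * ψ₂ x t := by
    field_simp; linarith
  have p2 : d1 Ψ₂ (z x t) t = Λ / u x t * ψ₁ x t + ψ₂ x t := by
    field_simp; linarith
  refine ⟨⟨p1, p2⟩, ?_, ?_⟩
  · rw [p1] at b1
    rw [← sub_eq_iff_eq_add'] at b1
    rw [← b1]
    field_simp
    ring
  · rw [p2] at b2
    rw [← sub_eq_iff_eq_add'] at b2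
    rw [← b2]
    field_simp
    ring
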